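/- arXiv:1112.3695 — 4 statements merged into one kernel-verified Lean document; each statement's English description precedes it below -/
import Mathlib

section
/- Let n ≥ 1, let f ∈ ℂ[x,y] be a nonzero homogeneous polynomial of degree n, let u = (u₁,u₂) ∈ ℂ² be nonzero, and let 1 ≤ c ≤ n. Then the c-fold directional derivative satisfies D_u^c f = 0 if and only if the linear form (u₂·x − u₁·y)^{n−c+1} divides f. -/
open MvPolynomial

/-!
The derivation `D_u` kills the linear form `L_u` vanishing at `u`, so `L_u ^ e ∣ f` implies
`L_u ^ e ∣ D_u^c f`; for `e > n - c` this is impossible for degree reasons unless `D_u^c f = 0`.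

Conversely, let `v` be a second direction with `L_u(v) = 1`. Euler's identity, written in the
basis `u`, `v`, reads `n f = L_u · D_v f - L_v · D_u f`. As `D_u` and `D_v` commute, `D_u^c f = 0`
gives `D_u^(c-1) (D_u f) = 0` and `D_u^c (D_v f) = 0`. By induction on the degree
`L_u ^ (n-c+1) ∣ D_u f` and `L_u ^ (n-c) ∣ D_v f`, so `L_u ^ (n-c+1) ∣ n f`, and `n` is invertible.
-/

section DirectionalDerivative

variable {σ R : Type*} [Fintype σ] [CommSemiring R]

/-- The directional derivative `D_u = ∑ i, u i · ∂/∂X i` on polynomials, bundled as a derivation so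
that the Leibniz rule is available. -/
noncomputable def directionalDeriv (u : σ → R) :
    Derivation R (MvPolynomial σ R) (MvPolynomial σ R) :=
  ∑ i, (C (u i) : MvPolynomial σ R) • pderiv i

theorem directionalDeriv_apply (u : σ → R) (f : MvPolynomial σ R) :
    directionalDeriv u f = ∑ i, C (u i) * pderiv i f := by
  rw [directionalDeriv, ← Derivation.coeFnAddMonoidHom_apply, map_sum, Finset.sum_apply]
  rfl

theorem coe_directionalDeriv_fin_two (u : Fin 2 → R) :
    ⇑(directionalDeriv u) = fun g ↦ C (u 0) * pderiv 0 g + C (u 1) * pderiv 1 g := by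
  ext1 g
  rw [directionalDeriv_apply, Fin.sum_univ_two]

theorem directionalDeriv_X (u : σ → R) (i : σ) : directionalDeriv u (X i) = C (u i) := by
  classical
  simp [directionalDeriv_apply, pderiv_X, Pi.single_apply]

theorem isHomogeneous_directionalDeriv (u : σ → R) {f : MvPolynomial σ R} {n : ℕ}
    (hf : f.IsHomogeneous n) : (directionalDeriv u f).IsHomogeneous (n - 1) := by
  rw [directionalDeriv_apply]
  exact IsHomogeneous.sum _ _ _ fun i _ ↦ hf.pderiv.C_mul (u i)

theorem isHomogeneous_iterate_directionalDeriv (u : σ → R) {f : MvPolynomial σ R} {n : ℕ}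
    (hf : f.IsHomogeneous n) (c : ℕ) : ((directionalDeriv u)^[c] f).IsHomogeneous (n - c) := by
  induction c with
  | zero => exact hf
  | succ c ih =>
    rw [Function.iterate_succ_apply', ← Nat.sub_sub]
    exact isHomogeneous_directionalDeriv u ih

theorem directionalDeriv_commute {R : Type*} [CommRing R] (u v : σ → R) :
    Function.Commute (directionalDeriv u) (directionalDeriv v) := by
  have bracket_eq_zero : ⁅directionalDeriv u, directionalDeriv v⁆ = 0 :=
    derivation_ext fun i ↦ by
      simp [Derivation.commutator_apply, directionalDeriv_X, ← algebraMap_eq]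
  intro f
  rw [← sub_eq_zero, ← Derivation.commutator_apply, bracket_eq_zero, Derivation.zero_apply]

end DirectionalDerivative

theorem dvd_iterate_derivation_of_dvd {R A : Type*} [CommSemiring R] [CommSemiring A] [Algebra R A]
    {D : Derivation R A A} {a b : A} (ha : D a = 0) (hab : a ∣ b) (c : ℕ) : a ∣ D^[c] b := by
  induction c with
  | zero => exact hab
  | succ c ih =>
    obtain ⟨g, hg⟩ := ih
    rw [Function.iterate_succ_apply', hg, D.leibniz, ha, smul_zero, add_zero]
    exact dvd_mul_right a (D g)

theorem eq_zero_of_isHomogeneous_of_dvd {σ R : Type*} [CommSemiring R] {p f : MvPolynomial σ R}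
    {d n : ℕ} (hp : p.IsHomogeneous d) (hf : f.IsHomogeneous n) (hnd : n < d) (hpf : p ∣ f) :
    f = 0 := by
  let _ : GradedAlgebra (homogeneousSubmodule σ R) := gradedAlgebra
  obtain ⟨g, rfl⟩ := hpf
  have h := DirectSum.coe_decompose_mul_of_left_mem_of_not_le (homogeneousSubmodule σ R)
    (b := g) hp hnd.not_ge
  rwa [DirectSum.decompose_of_mem_same _ hf] at h

section BinaryForm

open scoped Nat

variable {R : Type*} [CommRing R] {u : Fin 2 → R} {f : MvPolynomial (Fin 2) R} {n c e : ℕ}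

/-- The linear form `u₂·x - u₁·y` on the plane, which vanishes at `u = (u₁, u₂)`. -/
noncomputable def vanishingForm (u : Fin 2 → R) : MvPolynomial (Fin 2) R :=
  C (u 1) * X 0 - C (u 0) * X 1

theorem isHomogeneous_vanishingForm (u : Fin 2 → R) : (vanishingForm u).IsHomogeneous 1 :=
  (isHomogeneous_C_mul_X _ _).sub (isHomogeneous_C_mul_X _ _)

theorem directionalDeriv_vanishingForm_self (u : Fin 2 → R) :
    directionalDeriv u (vanishingForm u) = 0 := by
  simp [vanishingForm, ← smul_eq_C_mul, directionalDeriv_X, mul_comm]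

theorem euler_identity_of_directions (u v : Fin 2 → R) (hf : f.IsHomogeneous n) :
    C (u 1 * v 0 - u 0 * v 1) * (n • f) =
      vanishingForm u * directionalDeriv v f - vanishingForm v * directionalDeriv u f := by
  rw [← hf.sum_X_mul_pderiv]
  simp only [coe_directionalDeriv_fin_two, vanishingForm, Fin.sum_univ_two, C_sub, C_mul]
  ring

theorem iterate_directionalDeriv_eq_zero_of_dvd (hf : f.IsHomogeneous n) (hec : n - c < e)
    (hdvd : vanishingForm u ^ e ∣ f) : (directionalDeriv u)^[c] f = 0 := by
  have pow_const : directionalDeriv u (vanishingForm u ^ e) = 0 := by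
    rw [Derivation.leibniz_pow, directionalDeriv_vanishingForm_self, smul_zero, smul_zero]
  have pow_homogeneous : (vanishingForm u ^ e).IsHomogeneous e := by
    simpa only [one_mul] using (isHomogeneous_vanishingForm u).pow e
  exact eq_zero_of_isHomogeneous_of_dvd pow_homogeneous
    (isHomogeneous_iterate_directionalDeriv u hf c) hec
    (dvd_iterate_derivation_of_dvd pow_const hdvd c)

theorem exists_transverse_direction (hu : IsCoprime (u 0) (u 1)) :
    ∃ v : Fin 2 → R, u 1 * v 0 - u 0 * v 1 = 1 := by
  obtain ⟨a, b, hab⟩ := hu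
  exact ⟨![b, -a], by simpa [mul_comm, add_comm] using hab⟩

theorem vanishingForm_pow_dvd_of_iterate_directionalDeriv_eq_zero (hn : IsUnit (n ! : R))
    (hu : IsCoprime (u 0) (u 1)) (hf : f.IsHomogeneous n) (hec : e + c ≤ n + 1)
    (h : (directionalDeriv u)^[c] f = 0) : vanishingForm u ^ e ∣ f := by
  obtain ⟨v, huv⟩ := exists_transverse_direction hu
  induction n generalizing c e f with
  | zero =>
    obtain rfl | rfl : e = 0 ∨ c = 0 := by lia
    · simp
    · exact (show f = 0 from h) ▸ dvd_zero _
  | succ n ih =>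
    match e, c with
    | 0, _ => simp
    | _, 0 => exact (show f = 0 from h) ▸ dvd_zero _
    | e + 1, c + 1 =>
      rw [Nat.factorial_succ, Nat.cast_mul, IsUnit.mul_iff] at hn
      have dvd_deriv_u : vanishingForm u ^ (e + 1) ∣ directionalDeriv u f :=
        ih hn.2 (isHomogeneous_directionalDeriv u hf) (by lia) h
      have dvd_deriv_v : vanishingForm u ^ e ∣ directionalDeriv v f := by
        refine ih hn.2 (isHomogeneous_directionalDeriv v hf) (by lia : e + (c + 1) ≤ n + 1) ?_
        rw [(directionalDeriv_commute u v).iterate_left (c + 1) f, h, map_zero]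
      have degree_unit : IsUnit ((n + 1 : ℕ) : MvPolynomial (Fin 2) R) := by
        simpa only [map_natCast] using hn.1.map C
      have euler := euler_identity_of_directions u v hf
      rw [huv, C_1, one_mul, nsmul_eq_mul] at euler
      rw [← degree_unit.dvd_mul_left, euler]
      exact dvd_sub (pow_succ' (vanishingForm u) e ▸ mul_dvd_mul_left _ dvd_deriv_v)
        (dvd_deriv_u.mul_left _)

theorem directional_derivative_vanishes_iff_general (hn : IsUnit (n ! : R))
    (hu : IsCoprime (u 0) (u 1)) (hf : f.IsHomogeneous n) (hcn : c ≤ n) :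
    (directionalDeriv u)^[c] f = 0 ↔ vanishingForm u ^ (n - c + 1) ∣ f :=
  ⟨vanishingForm_pow_dvd_of_iterate_directionalDeriv_eq_zero hn hu hf (by lia),
    iterate_directionalDeriv_eq_zero_of_dvd hf (Nat.lt_succ_self _)⟩

end BinaryForm

theorem isCoprime_coords_of_ne_zero {K : Type*} [Semifield K] {u : Fin 2 → K} (hu : u ≠ 0) :
    IsCoprime (u 0) (u 1) := by
  simpa [Semifield.isCoprime_iff, Function.ne_iff, Fin.exists_fin_two] using hu

/-- for a nonzero binary form `f` of degree `n`, a nonzero direction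
`u` and `1 ≤ c ≤ n`, the `c`-fold directional derivative `D_u^c f` vanishes iff
the linear form `u₂·x − u₁·y` divides `f` to the power `n − c + 1`. -/
theorem directional_derivative_vanishes_iff (n : ℕ) (hn : 1 ≤ n)
    (f : MvPolynomial (Fin 2) ℂ) (hf : f ≠ 0) (hhom : f.IsHomogeneous n)
    (u : Fin 2 → ℂ) (hu : u ≠ 0) (c : ℕ) (hc1 : 1 ≤ c) (hcn : c ≤ n) :
    (fun g : MvPolynomial (Fin 2) ℂ =>
        C (u 0) * pderiv (0 : Fin 2) g + C (u 1) * pderiv (1 : Fin 2) g)^[c] f = 0 ↔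
      (C (u 1) * X (0 : Fin 2) - C (u 0) * X (1 : Fin 2)) ^ (n - c + 1) ∣ f := by
  exact coe_directionalDeriv_fin_two u ▸ directional_derivative_vanishes_iff_general
    (Nat.cast_ne_zero.mpr n.factorial_ne_zero).isUnit (isCoprime_coords_of_ne_zero hu) hhom hcn
end

section
/- Let n ≥ 2, let f ∈ ℂ[x,y] be a nonzero homogeneous polynomial of degree n, let (a₁,b₁) ∈ ℂ² be nonzero with (a₁·x + b₁·y) dividing f, and set g := conj(a₁)·∂f/∂x + conj(b₁)·∂f/∂y. Then g ≠ 0, and for every nonzero u = (u₁,u₂) ∈ ℂ² and every 1 ≤ c ≤ n−1: D_u^c g = 0 if and only if (u₂·x − u₁·y)^{n−c} divides g. -/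
open MvPolynomial

/-!
If a linear form `ℓ` divides `f ≠ 0` exactly `k + 1` times and `D_v ℓ ≠ 0`, then `D_v f` is
divisible by `ℓ` exactly `k` times, so `D_v f ≠ 0`; for `v` the conjugate of the coefficient vector
of `ℓ`, `D_v ℓ` is the squared norm of that vector.

Let `L_u = u₂ x - u₁ y`, which `D_u` kills, and let `h` be a binary form of degree `d`.
If `h = L_u ^ k * r`, then `D_u ^ c h = L_u ^ k * D_u ^ c r`, which vanishes as soon as the degree
`d - k` of `r` is less than `c`. Conversely, for `w` independent of `u`, Euler's identity in the
basis `u, w` expresses `d • h` as a combination of `L_w * D_u h` and `L_u * D_w h`. If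
`D_u ^ c h = 0`, then `D_u h` is killed by `D_u ^ (c - 1)` and, as directional derivatives commute,
`D_w h` is killed by `D_u ^ c`. By induction on the degree, `L_u` divides `D_u h` to the required
order and `D_w h` to one order less.
-/

theorem derivation_iterate_mul_of_apply_eq_zero {R A : Type*} [CommSemiring R] [CommSemiring A]
    [Algebra R A] (D : Derivation R A A) {a : A} (ha : D a = 0) (b : A) (c : ℕ) :
    D^[c] (a * b) = a * D^[c] b :=
  (Function.Semiconj.iterate_right (f := (a * ·)) (ga := D) (gb := D)
    (fun x ↦ by simp [ha]) c b).symm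

theorem derivation_apply_ne_zero_of_dvd {R A : Type*} [CommSemiring R] [CommRing A] [IsDomain A]
    [Algebra R A] [Algebra ℚ A] (D : Derivation R A A) {ℓ f : A} (hℓ : IsUnit (D ℓ))
    (hfin : FiniteMultiplicity ℓ f) (hdvd : ℓ ∣ f) : D f ≠ 0 := by
  intro hDf
  obtain ⟨r, hr, hndvd⟩ := hfin.exists_eq_pow_mul_and_not_dvd
  obtain ⟨k, hk⟩ := Nat.exists_eq_succ_of_ne_zero (multiplicity_ne_zero.mpr hdvd)
  rw [hk, Nat.succ_eq_add_one] at hr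
  have hℓ0 : ℓ ≠ 0 := by
    rintro rfl
    simp at hℓ
  have hleibniz : D f = ℓ ^ k * ((k + 1 : ℕ) * D ℓ * r + ℓ * D r) := by
    rw [hr, D.leibniz, D.leibniz_pow, Nat.add_sub_cancel]
    simp only [smul_eq_mul, nsmul_eq_mul]
    ring
  have hsum : (k + 1 : ℕ) * D ℓ * r + ℓ * D r = 0 :=
    (mul_eq_zero.mp (hleibniz.symm.trans hDf)).resolve_left (pow_ne_zero k hℓ0)
  have hunit : IsUnit (((k + 1 : ℕ) : A) * D ℓ) := by
    refine IsUnit.mul ?_ hℓ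
    simpa using (Nat.cast_ne_zero.mpr k.succ_ne_zero : ((k + 1 : ℕ) : ℚ) ≠ 0).isUnit.map
      (algebraMap ℚ A)
  exact hndvd (hunit.dvd_mul_left.mp
    ((dvd_add_left (dvd_mul_right ℓ (D r))).mp (hsum ▸ dvd_zero ℓ)))

theorem totalDegree_pderiv_le {R σ : Type*} [CommSemiring R] (i : σ) (h : MvPolynomial σ R) :
    (pderiv i h).totalDegree ≤ h.totalDegree - 1 := by
  refine Finset.sup_le fun m hm ↦ ?_
  have hcoeff : m + Finsupp.single i 1 ∈ h.support := by
    rw [mem_support_iff, coeff_pderiv] at hm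
    exact mem_support_iff.mpr (left_ne_zero_of_mul hm)
  have hdeg := le_totalDegree hcoeff
  rw [Finsupp.sum_add_index' (fun _ ↦ rfl) (fun _ _ _ ↦ rfl), Finsupp.sum_single_index rfl] at hdeg
  exact Nat.le_sub_of_add_le hdeg

section DirDeriv

variable {R σ : Type*} [Fintype σ]

/-- The directional derivative `D_v = ∑ i, v i • ∂/∂X_i` on polynomials, as a derivation. -/
noncomputable def dirDeriv [CommSemiring R] (v : σ → R) :
    Derivation R (MvPolynomial σ R) (MvPolynomial σ R) :=
  ∑ i, v i • pderiv i

section CommSemiring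

variable [CommSemiring R]

theorem dirDeriv_apply (v : σ → R) (h : MvPolynomial σ R) :
    dirDeriv v h = ∑ i, C (v i) * pderiv i h := by
  have hsum : ⇑(dirDeriv v) = ∑ i, ⇑(v i • pderiv (R := R) i) :=
    map_sum Derivation.coeFnAddMonoidHom _ Finset.univ
  simp only [hsum, Finset.sum_apply, Derivation.smul_apply, smul_eq_C_mul]

theorem dirDeriv_X (v : σ → R) (i : σ) : dirDeriv v (X i) = C (v i) := by
  classical
  simp [dirDeriv_apply, pderiv_X, Pi.single_apply]

theorem isHomogeneous_dirDeriv (v : σ → R) {h : MvPolynomial σ R} {d : ℕ}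
    (hh : h.IsHomogeneous d) : (dirDeriv v h).IsHomogeneous (d - 1) := by
  rw [dirDeriv_apply]
  exact IsHomogeneous.sum _ _ _ fun i _ ↦ hh.pderiv.C_mul (v i)

theorem totalDegree_dirDeriv_le (v : σ → R) (h : MvPolynomial σ R) :
    (dirDeriv v h).totalDegree ≤ h.totalDegree - 1 := by
  rw [dirDeriv_apply]
  refine totalDegree_finsetSum_le fun i _ ↦ ?_
  rw [← smul_eq_C_mul]
  exact (totalDegree_smul_le _ _).trans (totalDegree_pderiv_le i h)

theorem iterate_dirDeriv_eq_zero_of_totalDegree_lt (v : σ → R) {h : MvPolynomial σ R} {c : ℕ}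
    (hc : h.totalDegree < c) : (dirDeriv v)^[c] h = 0 := by
  induction c generalizing h with
  | zero => exact absurd hc (Nat.not_lt_zero _)
  | succ c ih =>
    rw [Function.iterate_succ_apply]
    by_cases hdeg : h.totalDegree = 0
    · rw [totalDegree_eq_zero_iff_eq_C.mp hdeg, derivation_C, iterate_map_zero]
    · exact ih ((totalDegree_dirDeriv_le v h).trans_lt (by omega))

end CommSemiring

theorem commute_dirDeriv [CommRing R] (v w : σ → R) :
    Function.Commute (dirDeriv v) (dirDeriv w) := by
  have hbracket : ⁅dirDeriv v, dirDeriv w⁆ = 0 := derivation_ext fun i ↦ by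
    simp [Derivation.commutator_apply, dirDeriv_X]
  intro h
  exact sub_eq_zero.mp ((Derivation.commutator_apply h).symm.trans congr($hbracket h))

theorem dirDeriv_ne_zero_of_dvd {K : Type*} [Field K] [CharZero K] {a v : σ → K}
    (hav : a ⬝ᵥ v ≠ 0) {f : MvPolynomial σ K} (hf : f ≠ 0)
    (hdvd : ∑ i, C (a i) * X i ∣ f) : dirDeriv v f ≠ 0 := by
  have hderiv : dirDeriv v (∑ i, C (a i) * X i) = C (a ⬝ᵥ v) := by
    simp [dirDeriv_X, dotProduct]
  have hnonunit : ¬IsUnit (∑ i, C (a i) * X i : MvPolynomial σ K) := fun hunit ↦ by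
    simpa using hunit.map (eval (0 : σ → K))
  exact derivation_apply_ne_zero_of_dvd _ (hderiv ▸ hav.isUnit.map C)
    (FiniteMultiplicity.of_not_isUnit hnonunit hf) hdvd

end DirDeriv

section BinaryForms

theorem dirDeriv_fin_two {R : Type*} [CommSemiring R] (v : Fin 2 → R) :
    ⇑(dirDeriv v) = fun h ↦ C (v 0) * pderiv 0 h + C (v 1) * pderiv 1 h := by
  funext h
  rw [dirDeriv_apply, Fin.sum_univ_two]

variable {R : Type*} [CommRing R] {u : Fin 2 → R}

/-- The linear form `u₂ x - u₁ y`, cutting out the line spanned by `u = (u₁, u₂)`;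
indices are shifted, so `u₁ = u 0` and `u₂ = u 1`. -/
noncomputable def lineForm (u : Fin 2 → R) : MvPolynomial (Fin 2) R :=
  C (u 1) * X 0 - C (u 0) * X 1

theorem dirDeriv_lineForm_self (u : Fin 2 → R) : dirDeriv u (lineForm u) = 0 := by
  simp [lineForm, dirDeriv_X, mul_comm]

theorem euler_identity_lineForm (u w : Fin 2 → R)
    {h : MvPolynomial (Fin 2) R} {d : ℕ} (hh : h.IsHomogeneous d) :
    C (u 0 * w 1 - u 1 * w 0) * (d • h) =
      lineForm w * dirDeriv u h - lineForm u * dirDeriv w h := by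
  rw [← hh.sum_X_mul_pderiv, Fin.sum_univ_two, dirDeriv_fin_two, dirDeriv_fin_two]
  simp only [lineForm, map_sub, map_mul]
  ring

theorem exists_det_ne_zero (hu : u ≠ 0) : ∃ w : Fin 2 → R, u 0 * w 1 - u 1 * w 0 ≠ 0 := by
  by_contra! hdet
  have h₀ := hdet ![0, 1]
  have h₁ := hdet ![1, 0]
  exact hu (funext (Fin.forall_fin_two.mpr ⟨by simpa using h₀, by simpa using h₁⟩))

theorem lineForm_ne_zero (hu : u ≠ 0) : lineForm u ≠ 0 := by
  obtain ⟨w, hw⟩ := exists_det_ne_zero hu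
  intro hzero
  have heval := congr(eval w $hzero)
  simp only [lineForm, map_sub, map_mul, eval_C, eval_X, map_zero] at heval
  exact hw (by linear_combination -heval)

theorem totalDegree_lineForm_pow [IsDomain R] (hu : u ≠ 0) (k : ℕ) :
    (lineForm u ^ k).totalDegree = k := by
  have hhom : (lineForm u).IsHomogeneous 1 :=
    ((isHomogeneous_X R 0).C_mul (u 1)).sub ((isHomogeneous_X R 1).C_mul (u 0))
  rw [(hhom.pow k).totalDegree (pow_ne_zero k (lineForm_ne_zero hu)), one_mul]

theorem iterate_dirDeriv_eq_zero_of_lineForm_pow_dvd [IsDomain R] (hu : u ≠ 0)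
    {h : MvPolynomial (Fin 2) R} {c k : ℕ} (hdeg : h.totalDegree < c + k)
    (hdvd : lineForm u ^ k ∣ h) : (dirDeriv u)^[c] h = 0 := by
  obtain ⟨r, rfl⟩ := hdvd
  obtain rfl | hr := eq_or_ne r 0
  · rw [mul_zero, iterate_map_zero]
  have hpow : dirDeriv u (lineForm u ^ k) = 0 := by
    rw [Derivation.leibniz_pow, dirDeriv_lineForm_self, smul_zero, smul_zero]
  rw [totalDegree_mul_of_isDomain (pow_ne_zero k (lineForm_ne_zero hu)) hr,
    totalDegree_lineForm_pow hu, add_comm, Nat.add_lt_add_iff_right] at hdeg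
  rw [derivation_iterate_mul_of_apply_eq_zero _ hpow,
    iterate_dirDeriv_eq_zero_of_totalDegree_lt u hdeg, mul_zero]

theorem lineForm_pow_dvd_of_iterate_dirDeriv_eq_zero {K : Type*} [Field K] [CharZero K]
    {u : Fin 2 → K} (hu : u ≠ 0) {h : MvPolynomial (Fin 2) K} {d c k : ℕ}
    (hh : h.IsHomogeneous d) (hck : c + k ≤ d + 1) (hzero : (dirDeriv u)^[c] h = 0) :
    lineForm u ^ k ∣ h := by
  obtain ⟨w, hw⟩ := exists_det_ne_zero hu
  induction d generalizing h c k with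
  | zero =>
    obtain rfl | rfl : c = 0 ∨ k = 0 := by omega
    · exact (show h = 0 from hzero) ▸ dvd_zero _
    · exact pow_zero (lineForm u) ▸ one_dvd h
  | succ d ih =>
    obtain _ | c := c
    · exact (show h = 0 from hzero) ▸ dvd_zero _
    obtain _ | k := k
    · exact pow_zero (lineForm u) ▸ one_dvd h
    have hdvd_u : lineForm u ^ (k + 1) ∣ dirDeriv u h :=
      ih (isHomogeneous_dirDeriv u hh) (c := c) (by omega) hzero
    have hdvd_w : lineForm u ^ k ∣ dirDeriv w h := by
      refine ih (isHomogeneous_dirDeriv w hh) (c := c + 1) (by omega) ?_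
      rw [(commute_dirDeriv u w).iterate_left (c + 1) h, hzero, map_zero]
    have hdvd_smul : lineForm u ^ (k + 1) ∣ C (u 0 * w 1 - u 1 * w 0) * ((d + 1) • h) := by
      rw [euler_identity_lineForm u w hh, pow_succ']
      exact dvd_sub ((pow_succ' (lineForm u) k ▸ hdvd_u).mul_left _) (mul_dvd_mul_left _ hdvd_w)
    have hunit : IsUnit
        (C (u 0 * w 1 - u 1 * w 0) * C ((d + 1 : ℕ) : K) : MvPolynomial (Fin 2) K) :=
      (hw.isUnit.map C).mul ((Nat.cast_ne_zero.mpr d.succ_ne_zero).isUnit.map C)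
    rwa [← Nat.cast_smul_eq_nsmul K, smul_eq_C_mul, ← mul_assoc, hunit.dvd_mul_left] at hdvd_smul

end BinaryForms

theorem mul_conj_add_mul_conj_ne_zero {a b : ℂ} (hab : ¬(a = 0 ∧ b = 0)) :
    a * (starRingEnd ℂ) a + b * (starRingEnd ℂ) b ≠ 0 := by
  rw [Complex.mul_conj, Complex.mul_conj, ← Complex.ofReal_add, Complex.ofReal_ne_zero]
  rwa [Ne, add_eq_zero_iff_of_nonneg (Complex.normSq_nonneg a) (Complex.normSq_nonneg b),
    Complex.normSq_eq_zero, Complex.normSq_eq_zero]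

theorem projected_state_directional_derivative_general {K : Type*} [Field K] [CharZero K] {n : ℕ}
    {f : MvPolynomial (Fin 2) K} (hf : f ≠ 0) (hhom : f.IsHomogeneous n) {a₁ b₁ v₁ v₂ : K}
    (hav : a₁ * v₁ + b₁ * v₂ ≠ 0)
    (hdvd : (C a₁ * X (0 : Fin 2) + C b₁ * X (1 : Fin 2)) ∣ f)
    {g : MvPolynomial (Fin 2) K}
    (hg : g = C v₁ * pderiv (0 : Fin 2) f + C v₂ * pderiv (1 : Fin 2) f) :
    g ≠ 0 ∧
      ∀ (u : Fin 2 → K), u ≠ 0 → ∀ c ≤ n,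
        ((fun h : MvPolynomial (Fin 2) K =>
            C (u 0) * pderiv (0 : Fin 2) h + C (u 1) * pderiv (1 : Fin 2) h)^[c] g = 0 ↔
          (C (u 1) * X (0 : Fin 2) - C (u 0) * X (1 : Fin 2)) ^ (n - c) ∣ g) := by
  have hgv : g = dirDeriv ![v₁, v₂] f := by simpa [dirDeriv_fin_two] using hg
  have hg0 : g ≠ 0 := by
    rw [hgv]
    exact dirDeriv_ne_zero_of_dvd (a := ![a₁, b₁]) (by simpa using hav) hf (by simpa using hdvd)
  have hghom : g.IsHomogeneous (n - 1) := hgv ▸ isHomogeneous_dirDeriv _ hhom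
  have hn : n ≠ 0 := by
    rintro rfl
    exact hg0 (hgv.trans (iterate_dirDeriv_eq_zero_of_totalDegree_lt (c := 1) _
      (by rw [hhom.totalDegree hf]; exact one_pos)))
  refine ⟨hg0, fun u hu c hc ↦ ?_⟩
  rw [← dirDeriv_fin_two, ← lineForm]
  exact ⟨lineForm_pow_dvd_of_iterate_dirDeriv_eq_zero hu hghom (by omega),
    iterate_dirDeriv_eq_zero_of_lineForm_pow_dvd hu (by rw [hghom.totalDegree hg0]; omega)⟩

/-- if the linear form `a₁·x + b₁·y` divides the nonzero degree-`n`
binary form `f` (n ≥ 2) and `g` is the directional derivative of `f` along the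
conjugate of `(a₁,b₁)`, then `g ≠ 0` and for every nonzero direction `u` and
`1 ≤ c ≤ n−1`, `D_u^c g = 0` iff `(u₂·x − u₁·y)^(n−c)` divides `g`. -/
theorem projected_state_directional_derivative (n : ℕ) (hn : 2 ≤ n)
    (f : MvPolynomial (Fin 2) ℂ) (hf : f ≠ 0) (hhom : f.IsHomogeneous n)
    (a₁ b₁ : ℂ) (hab : ¬(a₁ = 0 ∧ b₁ = 0))
    (hdvd : (C a₁ * X (0 : Fin 2) + C b₁ * X (1 : Fin 2)) ∣ f)
    (g : MvPolynomial (Fin 2) ℂ)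
    (hg : g = C ((starRingEnd ℂ) a₁) * pderiv (0 : Fin 2) f
            + C ((starRingEnd ℂ) b₁) * pderiv (1 : Fin 2) f) :
    g ≠ 0 ∧
      ∀ (u : Fin 2 → ℂ), u ≠ 0 → ∀ c : ℕ, 1 ≤ c → c ≤ n - 1 →
        ((fun h : MvPolynomial (Fin 2) ℂ =>
            C (u 0) * pderiv (0 : Fin 2) h + C (u 1) * pderiv (1 : Fin 2) h)^[c] g = 0 ↔
          (C (u 1) * X (0 : Fin 2) - C (u 0) * X (1 : Fin 2)) ^ (n - c) ∣ g) := by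
  obtain ⟨hg0, hiff⟩ :=
    projected_state_directional_derivative_general hf hhom (mul_conj_add_mul_conj_ne_zero hab)
      hdvd hg
  exact ⟨hg0, fun u hu c _ hc ↦ hiff u hu c (hc.trans (n.sub_le 1))⟩
end

section
/- Let n ≥ 2 and let f = K·∏_{j=1}^{l}(a_j·x + b_j·y)^{d_j} ∈ ℂ[x,y], where K ∈ ℂ is nonzero, the vectors (a_j,b_j) ∈ ℂ² are nonzero and pairwise non-proportional, each d_j ≥ 1, and Σ_j d_j = n. Set g := conj(a₁)·∂f/∂x + conj(b₁)·∂f/∂y. Then for every i ∈ {1,…,l}: if (a_i·x + b_i·y)^{d_i} divides g, then conj(a₁)·a_i + conj(b₁)·b_i = 0. -/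
open MvPolynomial Finset

/-!
Write `f = L ^ d * h`, where `L` is the linear form of the point `η_i` and `h` collects the other
factors. If `D` is the derivative in the direction `u`, the conjugate of `η₁`, then Leibniz' rule
gives `D f = L ^ (d - 1) * (d * D L * h + L * D h)`, so `L ^ d ∣ D f` if and only if
`L ∣ d * D L * h`. As `L` is prime and, by pairwise non-proportionality, divides no other factor of
`f`, this means `L ∣ D L`; but `D L` is the constant `⟨η₁|η_i⟩`, which a linear form divides only if
it vanishes.
-/

theorem pow_dvd_derivation_pow_mul_iff {R A : Type*} [CommSemiring R] [CommRing A] [IsDomain A]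
    [Algebra R A] (D : Derivation R A A) {p h : A} {d : ℕ} (hp : Prime p)
    (hd : ¬p ∣ (d : A)) (hh : ¬p ∣ h) : p ^ d ∣ D (p ^ d * h) ↔ p ∣ D p := by
  obtain ⟨k, rfl⟩ : ∃ k, d = k + 1 :=
    Nat.exists_eq_succ_of_ne_zero fun hd0 ↦ hd (by simp [hd0])
  have leibniz : D (p ^ (k + 1) * h) = p ^ k * (((k + 1 : ℕ) : A) * D p * h + p * D h) := by
    simp only [Derivation.leibniz, Derivation.leibniz_pow, smul_eq_mul, nsmul_eq_mul,
      Nat.add_sub_cancel]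
    ring
  rw [leibniz, pow_succ, mul_dvd_mul_iff_left (pow_ne_zero k hp.ne_zero),
    dvd_add_left (dvd_mul_right p _), hp.dvd_mul, hp.dvd_mul]
  simp only [hd, hh, false_or, or_false]

theorem derivation_sum_apply {R A M ι : Type*} [CommSemiring R] [CommSemiring A] [Algebra R A]
    [AddCommMonoid M] [Module A M] [Module R M] (s : Finset ι) (D : ι → Derivation R A M) (x : A) :
    (∑ i ∈ s, D i) x = ∑ i ∈ s, D i x :=
  (congrFun (map_sum Derivation.coeFnAddMonoidHom D s) x).trans (Finset.sum_apply x s _)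

theorem notMem_span_singleton_of_minor_ne_zero {R σ : Type*} [CommRing R] {a b : σ →₀ R} {s t : σ}
    (h : a s * b t - b s * a t ≠ 0) : a ∉ Submodule.span R {b} := by
  rw [Submodule.mem_span_singleton]
  rintro ⟨r, rfl⟩
  exact h (by simp only [Finsupp.smul_apply, smul_eq_mul]; ring)

section LinearForms

variable {R σ : Type*} [CommRing R]

/-- The derivative `∑ s, u s * ∂/∂X s` in the constant direction `u`. It is encoded by its values on
the variables, so that `σ` may be infinite. -/
noncomputable def directionalDerivation (u : σ → R) :
    Derivation R (MvPolynomial σ R) (MvPolynomial σ R) :=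
  mkDerivation R fun s ↦ C (u s)

theorem directionalDerivation_eq_sum [Fintype σ] (u : σ → R) :
    directionalDerivation u = ∑ s, C (σ := σ) (u s) • pderiv s := by
  classical
  refine derivation_ext fun t ↦ ?_
  simp [directionalDerivation, derivation_sum_apply, pderiv_X, Pi.single_apply]

theorem directionalDerivation_sumSMulX (u : σ → R) (c : σ →₀ R) :
    directionalDerivation u (sumSMulX c) = C (Finsupp.linearCombination R u c) := by
  simp [directionalDerivation, sumSMulX, Finsupp.linearCombination_apply, Finsupp.sum,
    smul_eq_C_mul]

theorem sumSMulX_equivFunOnFinite_symm [Fintype σ] (c : σ → R) :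
    sumSMulX (Finsupp.equivFunOnFinite.symm c) = ∑ s, C (c s) * X s := by
  rw [sumSMulX, Finsupp.linearCombination_apply, Finsupp.sum_fintype _ _ (by simp)]
  simp [smul_eq_C_mul]

theorem constantCoeff_sumSMulX (c : σ →₀ R) : constantCoeff (sumSMulX c) = 0 := by
  simp [sumSMulX, Finsupp.linearCombination_apply, Finsupp.sum]

theorem pderiv_sumSMulX (s : σ) (c : σ →₀ R) : pderiv s (sumSMulX c) = C (c s) := by
  classical
  rw [pderiv_def]
  by_cases hs : c s = 0 <;>
    simp [sumSMulX, Finsupp.linearCombination_apply, Finsupp.sum, Pi.single_apply, smul_eq_C_mul,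
      hs]

theorem sumSMulX_dvd_C_iff {c : σ →₀ R} {r : R} : sumSMulX c ∣ C r ↔ r = 0 := by
  refine ⟨fun ⟨q, hq⟩ ↦ ?_, fun hr ↦ by simp [hr]⟩
  simpa [constantCoeff_sumSMulX] using congrArg constantCoeff hq

theorem sumSMulX_dvd_sumSMulX_iff {a b : σ →₀ R} :
    sumSMulX a ∣ sumSMulX b ↔ b ∈ Submodule.span R {a} := by
  rw [Submodule.mem_span_singleton]
  constructor
  · rintro ⟨q, hq⟩
    refine ⟨constantCoeff q, Finsupp.ext fun s ↦ ?_⟩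
    simpa [pderiv_sumSMulX, constantCoeff_sumSMulX] using
      (congrArg (constantCoeff ∘ pderiv s) hq).symm
  · rintro ⟨t, rfl⟩
    rw [map_smul, smul_eq_C_mul]
    exact dvd_mul_left _ _

theorem prime_sumSMulX {k : Type*} [Field k] {c : σ →₀ k} (hc : c ≠ 0) : Prime (sumSMulX c) := by
  obtain ⟨s, hs⟩ := Finsupp.support_nonempty_iff.2 hc
  refine (irreducible_sumSMulX c ⟨s, hs⟩ fun r hr ↦ ?_).prime
  exact isUnit_of_dvd_unit (hr s) (Finsupp.mem_support_iff.1 hs).isUnit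

end LinearForms

theorem degeneracy_preserved_implies_orthogonal_general {k σ ι : Type*} [Field k] [Fintype ι]
    {K : k} (hK : K ≠ 0) (a : ι → σ →₀ k) (d : ι → ℕ) (u : σ → k) {i : ι} (hai : a i ≠ 0)
    (hdist : ∀ j, j ≠ i → a j ∉ Submodule.span k {a i}) (hdi : (d i : k) ≠ 0) :
    sumSMulX (a i) ^ d i ∣ directionalDerivation u (C K * ∏ j, sumSMulX (a j) ^ d j) ↔
      Finsupp.linearCombination k u (a i) = 0 := by
  classical
  have hp : Prime (sumSMulX (a i)) := prime_sumSMulX hai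
  have hd : ¬sumSMulX (a i) ∣ (d i : MvPolynomial σ k) := by
    rwa [← map_natCast C, sumSMulX_dvd_C_iff]
  have hcofactor : ¬sumSMulX (a i) ∣ C K * ∏ j ∈ univ.erase i, sumSMulX (a j) ^ d j := by
    rw [hp.dvd_mul, sumSMulX_dvd_C_iff, hp.dvd_finsetProd_iff]
    rintro (hK0 | ⟨j, hj, hdvd⟩)
    · exact hK hK0
    · exact hdist j (ne_of_mem_erase hj) (sumSMulX_dvd_sumSMulX_iff.1 (hp.dvd_of_dvd_pow hdvd))
  rw [← mul_prod_erase univ _ (mem_univ i), mul_left_comm,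
    pow_dvd_derivation_pow_mul_iff _ hp hd hcofactor, directionalDerivation_sumSMulX,
    sumSMulX_dvd_C_iff]

/-- for `f = K·∏_j (a_j·x + b_j·y)^{d_j}` of degree `n ≥ 2` and
`g = conj(a₁)·∂f/∂x + conj(b₁)·∂f/∂y`, if `(a_i·x + b_i·y)^{d_i}` divides `g`,
then `⟨η₁|η_i⟩ = conj(a₁)·a_i + conj(b₁)·b_i = 0`. -/
theorem degeneracy_preserved_implies_orthogonal (n l : ℕ) (hn : 2 ≤ n) (hl : 1 ≤ l)
    (K : ℂ) (hK : K ≠ 0) (a b : Fin l → ℂ) (d : Fin l → ℕ)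
    (hab : ∀ j, ¬(a j = 0 ∧ b j = 0))
    (hdist : ∀ j j', j ≠ j' → a j * b j' - a j' * b j ≠ 0)
    (hd : ∀ j, 1 ≤ d j) (hsum : ∑ j, d j = n)
    (f g : MvPolynomial (Fin 2) ℂ)
    (hf : f = C K * ∏ j, (C (a j) * X (0 : Fin 2) + C (b j) * X (1 : Fin 2)) ^ (d j))
    (hg : g = C ((starRingEnd ℂ) (a ⟨0, hl⟩)) * pderiv (0 : Fin 2) f
            + C ((starRingEnd ℂ) (b ⟨0, hl⟩)) * pderiv (1 : Fin 2) f) :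
    ∀ i : Fin l,
      (C (a i) * X (0 : Fin 2) + C (b i) * X (1 : Fin 2)) ^ (d i) ∣ g →
        (starRingEnd ℂ) (a ⟨0, hl⟩) * a i + (starRingEnd ℂ) (b ⟨0, hl⟩) * b i = 0 := by
  intro i hdvd
  let point (j : Fin l) : Fin 2 →₀ ℂ := Finsupp.equivFunOnFinite.symm ![a j, b j]
  have hne : point i ≠ 0 := fun h ↦ hab i ⟨DFunLike.congr_fun h 0, DFunLike.congr_fun h 1⟩
  have hspan (j) (hj : j ≠ i) : point j ∉ Submodule.span ℂ {point i} :=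
    notMem_span_singleton_of_minor_ne_zero (s := 0) (t := 1) (hdist j i hj)
  have hdi : (d i : ℂ) ≠ 0 := Nat.cast_ne_zero.2 (Nat.one_le_iff_ne_zero.1 (hd i))
  have orthogonal_of_dvd := (degeneracy_preserved_implies_orthogonal_general hK point d
    ![(starRingEnd ℂ) (a ⟨0, hl⟩), (starRingEnd ℂ) (b ⟨0, hl⟩)] hne hspan hdi).1
  simp only [point, sumSMulX_equivFunOnFinite_symm, directionalDerivation_eq_sum,
    Fin.sum_univ_two] at orthogonal_of_dvd
  simpa [Finsupp.linearCombination_apply, Finsupp.sum_fintype, mul_comm] using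
    orthogonal_of_dvd (by simpa [← hf, ← hg] using hdvd)
end

section
/- Let n ≥ 2 and let f ∈ ℂ[x,y] be a nonzero homogeneous polynomial of degree n which is NOT of the form K·(a₁·x + b₁·y)^p·(a₂·x + b₂·y)^{n−p} with K ∈ ℂ nonzero, 0 ≤ p ≤ n, and nonzero (a₁,b₁), (a₂,b₂) ∈ ℂ² satisfying conj(a₁)·a₂ + conj(b₁)·b₂ = 0. Then for every nonzero (a,b) ∈ ℂ² with (a·x + b·y) dividing f, setting g := conj(a)·∂f/∂x + conj(b)·∂f/∂y, there exists a nonzero (c,d) ∈ ℂ² such that (c·x + d·y) divides g but (c·x + d·y) does not divide f; consequently f(−d,c) ≠ 0, g(−d,c) = 0, and f(−b,a) = 0. -/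
/-!
Restrict `f` to the affine line `t ↦ t • (conj a, conj b) + (-b, a)`, obtaining a polynomial
`h ∈ ℂ[t]`. On this line `a·x + b·y` equals `N * t` with `N = |a|² + |b|²`, the orthogonal form
`-conj b·x + conj a·y` is the constant `N`, and a form of known degree is determined by its
restriction. Moreover `h 0 = 0`, and `h'` is the restriction of `g`. Suppose every root of `h'`
were a root of `h`. A root of `h` of multiplicity `k` has multiplicity `k - 1` in `h'`, so comparing
degrees `h` would have exactly one distinct root, namely `0`; then `h = k * t ^ m` and `f` would be
a Dicke form. So some point of the line is a zero of `g` but not of `f`.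

The same argument works for any direction `(α, β)` with `N = α * a + β * b ≠ 0` in place of
`(conj a, conj b)`, the second form then being `-β·x + α·y`.
-/

open MvPolynomial

section Homogeneous

variable {σ R A : Type*} [CommSemiring R] [CommSemiring A] [Algebra R A]

theorem aeval_smul_of_isHomogeneous {φ : MvPolynomial σ R} {n : ℕ} (hφ : φ.IsHomogeneous n)
    (z : A) (w : σ → A) : aeval (z • w) φ = z ^ n * aeval w φ := by
  simp only [aeval_def, eval₂_eq, Finset.mul_sum]
  refine Finset.sum_congr rfl fun s hs => ?_
  have hdeg : ∑ i ∈ s.support, s i = n := (hφ.degree_eq_sum_deg_support hs).symm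
  simp only [Pi.smul_apply, smul_eq_mul, mul_pow, Finset.prod_mul_distrib,
    Finset.prod_pow_eq_pow_sum, hdeg]
  ring

theorem eval_smul_of_isHomogeneous {φ : MvPolynomial σ R} {n : ℕ} (hφ : φ.IsHomogeneous n)
    (z : R) (x : σ → R) : eval (z • x) φ = z ^ n * eval x φ := by
  simpa only [coe_aeval_eq_eval, aeval_eq_eval] using aeval_smul_of_isHomogeneous hφ z x

end Homogeneous

section LinearForm

variable {R : Type*} [CommRing R]

/-- The binary linear form `a·x + b·y`; its zero line is spanned by `(-b, a)`. -/
noncomputable def linearForm (a b : R) : MvPolynomial (Fin 2) R :=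
  C a * X 0 + C b * X 1

theorem isHomogeneous_linearForm (a b : R) : (linearForm a b).IsHomogeneous 1 :=
  (isHomogeneous_C_mul_X a 0).add (isHomogeneous_C_mul_X b 1)

theorem eval_linearForm (a b : R) (x : Fin 2 → R) :
    eval x (linearForm a b) = a * x 0 + b * x 1 := by
  simp [linearForm]

theorem eval_eq_zero_of_linearForm_dvd {a b : R} {φ : MvPolynomial (Fin 2) R}
    (h : linearForm a b ∣ φ) : eval ![-b, a] φ = 0 := by
  have hroot : eval ![-b, a] (linearForm a b) = 0 := by
    rw [eval_linearForm]
    simp [mul_comm]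
  exact zero_dvd_iff.1 (hroot ▸ map_dvd (eval ![-b, a]) h)

theorem linearForm_dvd_iff {a b : R} (hab : IsCoprime a b) {φ : MvPolynomial (Fin 2) R} {n : ℕ}
    (hφ : φ.IsHomogeneous n) : linearForm a b ∣ φ ↔ eval ![-b, a] φ = 0 := by
  refine ⟨eval_eq_zero_of_linearForm_dvd, fun hzero => ?_⟩
  obtain ⟨s, t, hst⟩ := hab
  have hstC : C s * C a + C t * C b = (1 : MvPolynomial (Fin 2) R) := by
    rw [← C_mul, ← C_mul, ← C_add, hst, C_1]
  let π := Ideal.Quotient.mkₐ R (Ideal.span {linearForm a b})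
  let z : MvPolynomial (Fin 2) R := C s * X 1 - C t * X 0
  -- Modulo the form, Bézout's identity `s * a + t * b = 1` gives `(x, y) = z • (-b, a)`.
  have hdvd : ∀ i, linearForm a b ∣ X i - z * C (![-b, a] i) := by
    refine Fin.forall_fin_two.2 ⟨⟨C s, ?_⟩, ⟨C t, ?_⟩⟩
    · simp only [z, linearForm, Matrix.cons_val_zero, map_neg]
      linear_combination -X 0 * hstC
    · simp only [z, linearForm, Matrix.cons_val_one, Matrix.cons_val_fin_one]
      linear_combination -X 1 * hstC
  have hX : (fun i => π (X i)) = π z • (algebraMap R _ ∘ ![-b, a]) := funext fun i => by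
    rw [Pi.smul_apply, Function.comp_apply, smul_eq_mul, ← π.commutes, ← map_mul]
    exact Ideal.Quotient.eq.2 (Ideal.mem_span_singleton.2 (hdvd i))
  have hπ : π φ = 0 := by
    rw [← aeval_X_left_apply φ, comp_aeval_apply, hX, aeval_smul_of_isHomogeneous hφ,
      aeval_algebraMap_apply, aeval_eq_eval, hzero, map_zero, mul_zero]
  exact Ideal.mem_span_singleton.1 (Ideal.Quotient.eq_zero_iff_mem.1 hπ)

end LinearForm

section ChainRule

variable {σ R A : Type*} [Fintype σ] [CommSemiring R] [CommSemiring A] [Algebra R A]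

theorem derivation_aeval (D : Derivation R A A) (w : σ → A) (φ : MvPolynomial σ R) :
    D (aeval w φ) = ∑ i, aeval w (pderiv i φ) * D (w i) := by
  classical
  induction φ using MvPolynomial.induction_on with
  | C r => simp
  | add p q hp hq => simp only [map_add, hp, hq, add_mul, Finset.sum_add_distrib]
  | mul_X p j hp =>
    simp only [map_mul, aeval_X, Derivation.leibniz, smul_eq_mul, hp, pderiv_X, map_add, add_mul,
      Finset.sum_add_distrib, Finset.mul_sum, Pi.single_apply]
    simp [mul_assoc]

end ChainRule

section LineRestriction

variable {σ R : Type*} [CommSemiring R]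

/-- Restriction of a polynomial to the affine line `t ↦ t • u + v`, as a polynomial in `t`. -/
noncomputable def lineRestriction (u v : σ → R) : MvPolynomial σ R →ₐ[R] Polynomial R :=
  aeval fun i => Polynomial.C (u i) * Polynomial.X + Polynomial.C (v i)

theorem eval_lineRestriction (u v : σ → R) (φ : MvPolynomial σ R) (t : R) :
    (lineRestriction u v φ).eval t = eval (t • u + v) φ := by
  have hcoord : (fun i => Polynomial.aeval t
      (Polynomial.C (u i) * Polynomial.X + Polynomial.C (v i))) = t • u + v := by
    funext i
    simp [mul_comm t]
  rw [lineRestriction, ← Polynomial.coe_aeval_eq_eval, comp_aeval_apply, hcoord, aeval_eq_eval]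

theorem derivative_lineRestriction [Fintype σ] (u v : σ → R) (φ : MvPolynomial σ R) :
    (lineRestriction u v φ).derivative = lineRestriction u v (∑ i, C (u i) * pderiv i φ) := by
  have hchain := derivation_aeval Polynomial.derivative'
    (fun i => Polynomial.C (u i) * Polynomial.X + Polynomial.C (v i)) φ
  have hcoord (i : σ) : (Polynomial.C (u i) * Polynomial.X + Polynomial.C (v i)).derivative =
      Polynomial.C (u i) := by
    simp
  simp only [Polynomial.derivative'_apply, hcoord] at hchain
  simp only [lineRestriction, map_sum, map_mul, aeval_C, Polynomial.algebraMap_eq]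
  exact hchain.trans (Finset.sum_congr rfl fun _ _ => mul_comm _ _)

theorem natDegree_lineRestriction_le (u v : σ → R) (φ : MvPolynomial σ R) :
    (lineRestriction u v φ).natDegree ≤ φ.totalDegree := by
  simpa only [lineRestriction, mul_one] using
    aeval_natDegree_le φ le_rfl _ fun _ => Polynomial.natDegree_linear_le

theorem lineRestriction_linearForm {R : Type*} [CommRing R] (u v : Fin 2 → R) (a b : R) :
    lineRestriction u v (linearForm a b) =
      Polynomial.C (a * u 0 + b * u 1) * Polynomial.X + Polynomial.C (a * v 0 + b * v 1) := by
  simp only [lineRestriction, linearForm, map_add, map_mul, aeval_C, aeval_X,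
    Polynomial.algebraMap_eq]
  ring

end LineRestriction

section BinaryForm

variable {K : Type*} [Field K]

theorem eq_of_lineRestriction_eq [Infinite K] {u v : Fin 2 → K}
    (huv : u 0 * v 1 - u 1 * v 0 ≠ 0) {φ ψ : MvPolynomial (Fin 2) K} {n : ℕ}
    (hφ : φ.IsHomogeneous n) (hψ : ψ.IsHomogeneous n)
    (h : lineRestriction u v φ = lineRestriction u v ψ) : φ = ψ := by
  have hM : linearForm (-u 1) (u 0) ≠ 0 := fun h0 => huv <| by
    simpa [eval_linearForm, sub_eq_neg_add] using congrArg (eval v) h0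
  refine mul_left_cancel₀ hM (MvPolynomial.funext fun x => ?_)
  rw [map_mul, map_mul, eval_linearForm]
  generalize hm : -u 1 * x 0 + u 0 * x 1 = m
  rcases eq_or_ne m 0 with rfl | hm0
  · rw [zero_mul, zero_mul]
  -- Off the direction `u`, Cramer's rule puts a multiple of `x` on the line.
  obtain ⟨t, htm⟩ : ∃ t, t * m = x 0 * v 1 - x 1 * v 0 := ⟨_, div_mul_cancel₀ _ hm0⟩
  have hxline : x = (m / (u 0 * v 1 - u 1 * v 0)) • (t • u + v) := by
    funext i
    rw [Pi.smul_apply, Pi.add_apply, Pi.smul_apply, smul_eq_mul, smul_eq_mul, div_mul_eq_mul_div,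
      eq_div_iff huv]
    revert i
    refine Fin.forall_fin_two.2 ⟨?_, ?_⟩
    · linear_combination -u 0 * htm + v 0 * hm
    · linear_combination -u 1 * htm + v 1 * hm
  have ht : eval (t • u + v) φ = eval (t • u + v) ψ := by
    rw [← eval_lineRestriction, h, eval_lineRestriction]
  rw [hxline, eval_smul_of_isHomogeneous hφ, eval_smul_of_isHomogeneous hψ, ht]

theorem eq_linearForm_pow_mul_pow_of_lineRestriction_eq [Infinite K] {a b α β : K}
    (hN : α * a + β * b ≠ 0) {φ : MvPolynomial (Fin 2) K} {n : ℕ} (hφ : φ.IsHomogeneous n)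
    {k : K} {m : ℕ} (hm : m ≤ n)
    (h : lineRestriction ![α, β] ![-b, a] φ = Polynomial.C k * Polynomial.X ^ m) :
    φ = C (k / (α * a + β * b) ^ n) * linearForm a b ^ m * linearForm (-β) α ^ (n - m) := by
  have hdet : ![α, β] 0 * ![-b, a] 1 - ![α, β] 1 * ![-b, a] 0 ≠ 0 := by simpa using hN
  have hψ := (((isHomogeneous_linearForm a b).pow m).C_mul (k / (α * a + β * b) ^ n)).mul
    ((isHomogeneous_linearForm (-β) α).pow (n - m))
  rw [one_mul, one_mul, Nat.add_sub_cancel' hm] at hψ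
  refine eq_of_lineRestriction_eq hdet hφ hψ ?_
  have hL : lineRestriction ![α, β] ![-b, a] (linearForm a b) =
      Polynomial.C (α * a + β * b) * Polynomial.X := by
    rw [lineRestriction_linearForm]
    simp [mul_comm]
  have hM : lineRestriction ![α, β] ![-b, a] (linearForm (-β) α) =
      Polynomial.C (α * a + β * b) := by
    rw [lineRestriction_linearForm]
    simp [mul_comm, add_comm]
  have hC : k / (α * a + β * b) ^ n * (α * a + β * b) ^ m * (α * a + β * b) ^ (n - m) = k := by
    rw [mul_assoc, ← pow_add, Nat.add_sub_cancel' hm, div_mul_cancel₀ k (pow_ne_zero n hN)]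
  rw [h, map_mul, map_mul, map_pow, map_pow, hL, hM, lineRestriction, aeval_C,
    Polynomial.algebraMap_eq]
  nth_rw 1 [← hC]
  simp only [map_mul, map_pow]
  ring

end BinaryForm

section Univariate

theorem roots_derivative_add_dedup_roots {R : Type*} [CommRing R] [IsDomain R] [CharZero R]
    [DecidableEq R] {h : Polynomial R} (hh : h ≠ 0)
    (hr : ∀ t, h.derivative.IsRoot t → h.IsRoot t) :
    h.derivative.roots + h.roots.dedup = h.roots := by
  ext t
  rw [Multiset.count_add, Polynomial.count_roots, Polynomial.count_roots, Multiset.count_dedup]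
  by_cases ht : h.IsRoot t
  · rw [Polynomial.derivative_rootMultiplicity_of_root ht, if_pos ((Polynomial.mem_roots hh).2 ht),
      Nat.sub_add_cancel ((Polynomial.rootMultiplicity_pos hh).2 ht)]
  · rw [Polynomial.rootMultiplicity_eq_zero (mt (hr t) ht),
      Polynomial.rootMultiplicity_eq_zero ht, if_neg (mt Polynomial.isRoot_of_mem_roots ht)]

variable {K : Type*} [Field K] [IsAlgClosed K] [CharZero K]

theorem eq_C_mul_X_sub_C_pow_of_derivative_isRoot_imp {h : Polynomial K} {a : K}
    (ha : h.IsRoot a) (hr : ∀ t, h.derivative.IsRoot t → h.IsRoot t) :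
    h = Polynomial.C h.leadingCoeff * (Polynomial.X - Polynomial.C a) ^ h.natDegree := by
  classical
  rcases eq_or_ne h 0 with rfl | hh
  · simp
  have ha_mem : a ∈ h.roots := (Polynomial.mem_roots hh).2 ha
  have hcard := congrArg Multiset.card (roots_derivative_add_dedup_roots hh hr)
  rw [Multiset.card_add, IsAlgClosed.card_roots_eq_natDegree, IsAlgClosed.card_roots_eq_natDegree,
    Polynomial.natDegree_derivative] at hcard
  have hpos : 0 < h.natDegree := by
    rw [← IsAlgClosed.card_roots_eq_natDegree]
    exact Multiset.card_pos_iff_exists_mem.2 ⟨a, ha_mem⟩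
  obtain ⟨z, hz⟩ : ∃ z, h.roots.dedup = {z} := Multiset.card_eq_one.1 (by omega)
  have hmem {t : K} (ht : t ∈ h.roots) : t = z :=
    Multiset.mem_singleton.1 (hz ▸ Multiset.mem_dedup.2 ht)
  have hroots : h.roots = Multiset.replicate h.natDegree a :=
    Multiset.eq_replicate.2 ⟨IsAlgClosed.card_roots_eq_natDegree,
      fun t ht => (hmem ht).trans (hmem ha_mem).symm⟩
  conv_lhs => rw [(IsAlgClosed.splits h).eq_prod_roots, hroots]
  rw [Multiset.map_replicate, Multiset.prod_replicate]

end Univariate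

section Hardy

variable {K : Type*} [Field K] [IsAlgClosed K] [CharZero K]

theorem exists_eval_ne_zero_and_eval_derivative_eq_zero {a b α β : K} (hN : α * a + β * b ≠ 0)
    {f : MvPolynomial (Fin 2) K} {n : ℕ} (hf : f.IsHomogeneous n)
    (hzero : eval ![-b, a] f = 0)
    (hsplit : ¬∃ (k : K) (m : ℕ), m ≤ n ∧
      f = C k * linearForm a b ^ m * linearForm (-β) α ^ (n - m)) :
    ∃ t : K, eval (t • ![α, β] + ![-b, a]) f ≠ 0 ∧
      eval (t • ![α, β] + ![-b, a]) (C α * pderiv 0 f + C β * pderiv 1 f) = 0 := by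
  by_contra! hcon
  set h := lineRestriction ![α, β] ![-b, a] f
  have hroot : h.IsRoot 0 := by
    rwa [Polynomial.IsRoot, eval_lineRestriction, zero_smul, zero_add]
  have hderiv : ∀ t, h.derivative.IsRoot t → h.IsRoot t := by
    intro t ht
    rw [Polynomial.IsRoot, derivative_lineRestriction, Fin.sum_univ_two,
      eval_lineRestriction] at ht
    rw [Polynomial.IsRoot, eval_lineRestriction]
    by_contra hne
    exact hcon t hne ht
  have hpow := eq_C_mul_X_sub_C_pow_of_derivative_isRoot_imp hroot hderiv
  rw [Polynomial.C_0, sub_zero] at hpow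
  have hdeg : h.natDegree ≤ n := (natDegree_lineRestriction_le _ _ f).trans hf.totalDegree_le
  exact hsplit ⟨_, _, hdeg, eq_linearForm_pow_mul_pow_of_lineRestriction_eq hN hf hdeg hpow⟩

theorem hardy_measurements_exist_general {a b α β : K} (hN : α * a + β * b ≠ 0)
    {f : MvPolynomial (Fin 2) K} {n : ℕ} (hf : f.IsHomogeneous n)
    (hsplit : ¬∃ (k : K) (m : ℕ), m ≤ n ∧
      f = C k * linearForm a b ^ m * linearForm (-β) α ^ (n - m))
    (hdvd : linearForm a b ∣ f) {g : MvPolynomial (Fin 2) K}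
    (hg : g = C α * pderiv 0 f + C β * pderiv 1 f) :
    ∃ c d : K, ¬(c = 0 ∧ d = 0) ∧ linearForm c d ∣ g ∧ ¬linearForm c d ∣ f ∧
      eval ![-d, c] f ≠ 0 ∧ eval ![-d, c] g = 0 ∧ eval ![-b, a] f = 0 := by
  have hzero := eval_eq_zero_of_linearForm_dvd hdvd
  obtain ⟨t, hft, hgt⟩ := exists_eval_ne_zero_and_eval_derivative_eq_zero hN hf hzero hsplit
  have hpoint : t • ![α, β] + ![-b, a] = ![-(b - t * α), t * β + a] := by
    simp [sub_eq_add_neg]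
  rw [hpoint] at hft hgt
  rw [← hg] at hgt
  have hcop : IsCoprime (t * β + a) (b - t * α) :=
    ⟨α / (α * a + β * b), β / (α * a + β * b), by field_simp; ring⟩
  have hghom : g.IsHomogeneous (n - 1) := hg ▸ (hf.pderiv.C_mul α).add (hf.pderiv.C_mul β)
  exact ⟨_, _, not_and_or.2 hcop.ne_zero_or_ne_zero, (linearForm_dvd_iff hcop hghom).2 hgt,
    mt (linearForm_dvd_iff hcop hf).1 hft, hft, hgt, hzero⟩

end Hardy

theorem conj_mul_self_add_conj_mul_self_ne_zero {𝕜 : Type*} [RCLike 𝕜] {a b : 𝕜}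
    (hab : ¬(a = 0 ∧ b = 0)) :
    (starRingEnd 𝕜) a * a + (starRingEnd 𝕜) b * b ≠ 0 := by
  rw [RCLike.conj_mul, RCLike.conj_mul]
  norm_cast
  contrapose! hab
  rw [add_eq_zero_iff_of_nonneg (sq_nonneg _) (sq_nonneg _)] at hab
  simpa using hab

/-- if the nonzero degree-`n` binary form `f` (n ≥ 2) is not a
rotated Dicke form, then for any linear factor `a·x + b·y` of `f`, the derived
form `g = conj(a)·∂f/∂x + conj(b)·∂f/∂y` has a linear factor `c·x + d·y` which
does not divide `f`; consequently `f(−d,c) ≠ 0`, `g(−d,c) = 0`, `f(−b,a) = 0`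
(the Hardy paradox conditions). -/
theorem hardy_measurements_exist (n : ℕ) (hn : 2 ≤ n)
    (f : MvPolynomial (Fin 2) ℂ) (hf : f ≠ 0) (hhom : f.IsHomogeneous n)
    (hnotdicke : ¬ ∃ (K : ℂ) (p : ℕ) (a₁ b₁ a₂ b₂ : ℂ), K ≠ 0 ∧ p ≤ n ∧
        ¬(a₁ = 0 ∧ b₁ = 0) ∧ ¬(a₂ = 0 ∧ b₂ = 0) ∧
        (starRingEnd ℂ) a₁ * a₂ + (starRingEnd ℂ) b₁ * b₂ = 0 ∧
        f = C K * (C a₁ * X (0 : Fin 2) + C b₁ * X (1 : Fin 2)) ^ p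
              * (C a₂ * X (0 : Fin 2) + C b₂ * X (1 : Fin 2)) ^ (n - p)) :
    ∀ a b : ℂ, ¬(a = 0 ∧ b = 0) →
      (C a * X (0 : Fin 2) + C b * X (1 : Fin 2)) ∣ f →
      ∀ g : MvPolynomial (Fin 2) ℂ,
        g = C ((starRingEnd ℂ) a) * pderiv (0 : Fin 2) f
          + C ((starRingEnd ℂ) b) * pderiv (1 : Fin 2) f →
        ∃ c d : ℂ, ¬(c = 0 ∧ d = 0) ∧
          (C c * X (0 : Fin 2) + C d * X (1 : Fin 2)) ∣ g ∧
          ¬ ((C c * X (0 : Fin 2) + C d * X (1 : Fin 2)) ∣ f) ∧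
          eval ![-d, c] f ≠ 0 ∧ eval ![-d, c] g = 0 ∧ eval ![-b, a] f = 0 := by
  intro a b hab hdvd g hg
  have hN := conj_mul_self_add_conj_mul_self_ne_zero hab
  refine hardy_measurements_exist_general hN hhom ?_ hdvd hg
  rintro ⟨K, m, hm, hK⟩
  have hK0 : K ≠ 0 := by
    rintro rfl
    simp [hf] at hK
  refine hnotdicke ⟨K, m, a, b, _, _, hK0, hm, hab, ?_, by ring, hK⟩
  rintro ⟨hb, ha⟩
  exact hN (by rw [ha, neg_eq_zero.1 hb, zero_mul, zero_mul, add_zero])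
end
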